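/- Along positive integers a → ∞, with l = 4a² − 1, the following asymptotic expansions hold: log g_{4a²−1}(a) = 1/(2a) + 7/(32a³) + O(a^{−5}) and log h_{4a²−1}(a) = 1/(2a) + 13/(96a³) + O(a^{−5}). In particular, for all sufficiently large a, g_{4a²−1}(a) > h_{4a²−1}(a). -/

import Mathlib

open Filter Asymptotics

/-- `h_l(j) = (l+j)/(l-j)` as a rational number. -/
def hFn (l j : ℕ) : ℚ := ((l : ℚ) + j) / ((l : ℚ) - j)

/-- `g_l(j) = ((l+j)^(2j))² / ((l+3j)^(2j) · (l−j)^(2j))` as a rational number, where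
`x^(m)` denotes the descending factorial `x(x−1)⋯(x−m+1)`. -/
def gFn (l j : ℕ) : ℚ :=
  ((Nat.descFactorial (l + j) (2 * j) : ℚ)) ^ 2 /
    ((Nat.descFactorial (l + 3 * j) (2 * j) : ℚ) * (Nat.descFactorial (l - j) (2 * j) : ℚ))

/-!
Write `N = l + 1`, `r = j / N` and `x = N + s` with `s = j - 1 - i`. The `i`-th factors of the three
descending factorials of `g_l(j)` are `x`, `x + 2j` and `x - 2j`, so that `g_l(j)` is the product
over `-j ≤ s < j` of `(1 - (2j / x)²)⁻¹ = (1 - (2r / (1 + t))²)⁻¹` with `t = s / N` and `|t| ≤ r`.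
The logarithm of each factor is its Taylor polynomial of total degree 5 in `(r, t)` up to `O(r⁶)`,
and the Taylor polynomials are summed exactly. On the other side `h_l(j) = (1 + y) / (1 - y)` with
`y = j / l`, whose logarithm is `2y + 2y³/3 + O(y⁵)`. For `l = 4a² - 1` and `j = a` one has
`r = 1 / (4a)`, and the two expansions first differ at `1 / a³`.
-/

theorem abs_log_one_sub_add_le {u : ℝ} (hu : |u| ≤ 1 / 2) :
    |Real.log (1 - u) + (u + u ^ 2 / 2)| ≤ 2 * |u| ^ 3 := by
  have remainder : |u + u ^ 2 / 2 + Real.log (1 - u)| ≤ |u| ^ 3 / (1 - |u|) := by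
    simpa [Finset.sum_range_succ, one_add_one_eq_two] using
      Real.abs_log_sub_add_sum_range_le (x := u) (by linarith) 2
  rw [add_comm]
  refine remainder.trans ((div_le_iff₀ (by linarith)).2 ?_)
  nlinarith [pow_nonneg (abs_nonneg u) 3]

theorem abs_inv_one_add_sq_sub_le {t : ℝ} (ht : -(1 / 4) ≤ t) :
    |(1 + t)⁻¹ ^ 2 - (1 - 2 * t + 3 * t ^ 2 - 4 * t ^ 3)| ≤ 16 * t ^ 4 := by
  have one_add_pos : 0 < 1 + t := by linarith
  have remainder_eq : (1 + t)⁻¹ ^ 2 - (1 - 2 * t + 3 * t ^ 2 - 4 * t ^ 3) =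
      (1 + 4 * (1 + t)) / (1 + t) ^ 2 * t ^ 4 := by
    field_simp
    ring
  rw [remainder_eq, abs_of_nonneg (by positivity)]
  gcongr
  rw [div_le_iff₀ (by positivity)]
  nlinarith

theorem abs_inv_one_add_pow_four_sub_le {t : ℝ} (ht : -(1 / 4) ≤ t) :
    |(1 + t)⁻¹ ^ 4 - (1 - 4 * t)| ≤ 60 * t ^ 2 := by
  have one_add_ge : 3 / 4 ≤ 1 + t := by linarith
  have one_add_pos : 0 < 1 + t := by linarith
  have remainder_eq : (1 + t)⁻¹ ^ 4 - (1 - 4 * t) =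
      (1 + 2 * (1 + t) + 3 * (1 + t) ^ 2 + 4 * (1 + t) ^ 3) / (1 + t) ^ 4 * t ^ 2 := by
    field_simp
    ring
  rw [remainder_eq, abs_of_nonneg (by positivity)]
  gcongr
  rw [div_le_iff₀ (by positivity)]
  generalize 1 + t = w at one_add_ge one_add_pos
  nlinarith [mul_nonneg (pow_nonneg one_add_pos.le 3) (sub_nonneg.2 one_add_ge),
    mul_nonneg (pow_nonneg one_add_pos.le 2) (sub_nonneg.2 one_add_ge),
    mul_nonneg one_add_pos.le (sub_nonneg.2 one_add_ge)]

/-- The Taylor polynomial of `-log (1 - (2r / (1 + t))²)` at the origin, of total degree 5 in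
`(r, t)`; it approximates the logarithm of a factor of `g_l(j)`. -/
def logFactorTaylor (r t : ℝ) : ℝ :=
  4 * r ^ 2 * (1 - 2 * t + 3 * t ^ 2 - 4 * t ^ 3) + 8 * r ^ 4 * (1 - 4 * t)

theorem abs_log_inv_one_sub_sq_sub_logFactorTaylor_le {r t : ℝ} (hr : r ≤ 1 / 4) (ht : |t| ≤ r) :
    |Real.log (1 - (2 * r / (1 + t)) ^ 2)⁻¹ - logFactorTaylor r t| ≤ 1280 * r ^ 6 := by
  have r_nonneg : 0 ≤ r := (abs_nonneg t).trans ht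
  have t_ge : -(1 / 4) ≤ t := by linarith [(abs_le.1 ht).1]
  have one_add_ge : 3 / 4 ≤ 1 + t := by linarith
  have u_le : (2 * r / (1 + t)) ^ 2 ≤ (2 * r / (3 / 4)) ^ 2 := by gcongr
  have log_error : |Real.log (1 - (2 * r / (1 + t)) ^ 2)
      + ((2 * r / (1 + t)) ^ 2 + ((2 * r / (1 + t)) ^ 2) ^ 2 / 2)| ≤ 720 * r ^ 6 := by
    refine (abs_log_one_sub_add_le ?_).trans ?_
    · rw [abs_of_nonneg (by positivity)]
      nlinarith
    · rw [abs_of_nonneg (by positivity)]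
      calc 2 * ((2 * r / (1 + t)) ^ 2) ^ 3 ≤ 2 * ((2 * r / (3 / 4)) ^ 2) ^ 3 := by gcongr
        _ ≤ 720 * r ^ 6 := by nlinarith [pow_nonneg r_nonneg 6]
  have sq_error : |4 * r ^ 2 * ((1 + t)⁻¹ ^ 2 - (1 - 2 * t + 3 * t ^ 2 - 4 * t ^ 3))|
      ≤ 64 * r ^ 6 := by
    rw [abs_mul, abs_of_nonneg (by positivity)]
    calc _ ≤ 4 * r ^ 2 * (16 * t ^ 4) := by gcongr; exact abs_inv_one_add_sq_sub_le t_ge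
      _ ≤ 4 * r ^ 2 * (16 * r ^ 4) := by rw [← Even.pow_abs (by decide) t]; gcongr
      _ = 64 * r ^ 6 := by ring
  have pow_four_error : |8 * r ^ 4 * ((1 + t)⁻¹ ^ 4 - (1 - 4 * t))| ≤ 480 * r ^ 6 := by
    rw [abs_mul, abs_of_nonneg (by positivity)]
    calc _ ≤ 8 * r ^ 4 * (60 * t ^ 2) := by
          gcongr; exact abs_inv_one_add_pow_four_sub_le t_ge
      _ ≤ 8 * r ^ 4 * (60 * r ^ 2) := by rw [← Even.pow_abs (by decide) t]; gcongr
      _ = 480 * r ^ 6 := by ring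
  have error_eq : Real.log (1 - (2 * r / (1 + t)) ^ 2)⁻¹ - logFactorTaylor r t =
      -(Real.log (1 - (2 * r / (1 + t)) ^ 2)
        + ((2 * r / (1 + t)) ^ 2 + ((2 * r / (1 + t)) ^ 2) ^ 2 / 2))
      + 4 * r ^ 2 * ((1 + t)⁻¹ ^ 2 - (1 - 2 * t + 3 * t ^ 2 - 4 * t ^ 3))
      + 8 * r ^ 4 * ((1 + t)⁻¹ ^ 4 - (1 - 4 * t)) := by
    rw [Real.log_inv, logFactorTaylor]
    ring
  rw [error_eq]
  refine (abs_add_three _ _ _).trans ?_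
  rw [abs_neg]
  linarith [pow_nonneg r_nonneg 6]

-- The values `s = j - 1 - i` run over `-j ≤ s < j`, so odd powers cancel except at `s = -j`.
open Finset in
theorem sum_range_two_mul_cubic (c₀ c₁ c₂ c₃ : ℝ) (j : ℕ) :
    ∑ i ∈ range (2 * j), (c₀ + c₁ * (j - 1 - i) + c₂ * (j - 1 - i) ^ 2 + c₃ * (j - 1 - i) ^ 3) =
      c₀ * (2 * j) - c₁ * j + c₂ * (j * (2 * j ^ 2 + 1) / 3) - c₃ * j ^ 3 := by
  induction j with
  | zero => simp
  | succ j ih =>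
    rw [mul_add, mul_one, sum_range_succ, sum_range_succ']
    simp only [Nat.cast_add, Nat.cast_one, Nat.cast_mul, Nat.cast_ofNat, Nat.cast_zero,
      add_sub_cancel_right, sub_zero, ← sub_sub, sub_right_comm (j : ℝ) _ (1 : ℝ)]
    rw [ih]
    ring

theorem sum_logFactorTaylor (r N : ℝ) (j : ℕ) :
    ∑ i ∈ Finset.range (2 * j), logFactorTaylor r ((j - 1 - i) / N) =
      4 * r ^ 2 * (2 * j + 2 * (j / N) + j * (2 * j ^ 2 + 1) / N ^ 2 + 4 * (j / N) ^ 3)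
        + 8 * r ^ 4 * (2 * j + 4 * (j / N)) := by
  calc _ = ∑ i ∈ Finset.range (2 * j), ((4 * r ^ 2 + 8 * r ^ 4)
        + (-(8 * r ^ 2 / N) - 32 * r ^ 4 / N) * (j - 1 - i)
        + 12 * r ^ 2 / N ^ 2 * (j - 1 - i) ^ 2 + -(16 * r ^ 2 / N ^ 3) * (j - 1 - i) ^ 3) :=
        Finset.sum_congr rfl fun i _ ↦ by rw [logFactorTaylor]; ring
    _ = _ := by rw [sum_range_two_mul_cubic]; ring

theorem cast_descFactorial_eq_prod_range {R : Type*} [CommRing R] (n k : ℕ) :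
    (n.descFactorial k : R) = ∏ i ∈ Finset.range k, ((n : R) - i) := by
  rw [← descPochhammer_eval_eq_descFactorial, descPochhammer_eval_eq_prod_range]

theorem gFn_eq_prod {l j : ℕ} (h : 3 * j ≤ l) :
    gFn l j = ∏ i ∈ Finset.range (2 * j), (1 - (2 * j / (l + j - i : ℚ)) ^ 2)⁻¹ := by
  simp only [gFn, cast_descFactorial_eq_prod_range]
  rw [← Finset.prod_pow, ← Finset.prod_mul_distrib, ← Finset.prod_div_distrib]
  refine Finset.prod_congr rfl fun i hi ↦ ?_
  have i_lt : (i : ℚ) < 2 * j := by exact_mod_cast Finset.mem_range.1 hi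
  have le_l : (3 * j : ℚ) ≤ l := by exact_mod_cast h
  have x_pos : (0 : ℚ) < l + j - i := by linarith [Nat.cast_nonneg (α := ℚ) j]
  push_cast [Nat.cast_sub (show j ≤ l by omega)]
  rw [show (l + 3 * j - i : ℚ) * (l - j - i) = (l + j - i) ^ 2 - (2 * j) ^ 2 by ring, div_pow,
    one_sub_div (by positivity), inv_div]

theorem gFn_pos {l j : ℕ} (h : 3 * j ≤ l) : 0 < gFn l j := by
  have num_pos : 0 < (l + j).descFactorial (2 * j) := Nat.descFactorial_pos.2 (by omega)
  have left_pos : 0 < (l + 3 * j).descFactorial (2 * j) := Nat.descFactorial_pos.2 (by omega)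
  have right_pos : 0 < (l - j).descFactorial (2 * j) := Nat.descFactorial_pos.2 (by omega)
  unfold gFn
  positivity

theorem log_gFn_eq_sum {l j : ℕ} (h : 3 * j ≤ l) :
    Real.log (gFn l j : ℚ) = ∑ i ∈ Finset.range (2 * j),
      Real.log (1 - (2 * (j / (l + 1)) / (1 + (j - 1 - i) / (l + 1) : ℝ)) ^ 2)⁻¹ := by
  have cast_eq : ((gFn l j : ℚ) : ℝ) = ∏ i ∈ Finset.range (2 * j),
      (1 - (2 * (j / (l + 1)) / (1 + (j - 1 - i) / (l + 1) : ℝ)) ^ 2)⁻¹ := by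
    rw [gFn_eq_prod h]
    push_cast
    refine Finset.prod_congr rfl fun i _ ↦ ?_
    rw [one_add_div (by positivity), mul_div_assoc', div_div_div_cancel_right₀ (by positivity)]
    ring_nf
  have prod_pos : (0 : ℝ) < gFn l j := by exact_mod_cast gFn_pos h
  rw [cast_eq] at prod_pos ⊢
  exact Real.log_prod (Finset.prod_ne_zero_iff.1 prod_pos.ne')

theorem abs_log_gFn_sub_sum_logFactorTaylor_le {l j : ℕ} (h : 4 * j ≤ l + 1) :
    |Real.log (gFn l j : ℚ)
        - ∑ i ∈ Finset.range (2 * j), logFactorTaylor (j / (l + 1)) ((j - 1 - i) / (l + 1))|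
      ≤ 2560 * j * (j / (l + 1) : ℝ) ^ 6 := by
  rw [log_gFn_eq_sum (by omega), ← Finset.sum_sub_distrib]
  have ratio_le : (j / (l + 1) : ℝ) ≤ 1 / 4 := by
    rw [div_le_div_iff₀ (by positivity) (by norm_num)]
    exact_mod_cast (by omega : j * 4 ≤ 1 * (l + 1))
  calc _ ≤ ∑ i ∈ Finset.range (2 * j), 1280 * (j / (l + 1) : ℝ) ^ 6 := by
        refine (Finset.abs_sum_le_sum_abs _ _).trans (Finset.sum_le_sum fun i hi ↦ ?_)
        refine abs_log_inv_one_sub_sq_sub_logFactorTaylor_le ratio_le ?_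
        have i_succ_le : (i + 1 : ℝ) ≤ 2 * j := by exact_mod_cast Finset.mem_range.1 hi
        have s_abs_le : |(j - 1 - i : ℝ)| ≤ j :=
          abs_le.2 ⟨by linarith, by linarith [Nat.cast_nonneg (α := ℝ) i]⟩
        rw [abs_div, abs_of_pos (by positivity : (0 : ℝ) < l + 1)]
        gcongr
    _ = _ := by
        rw [Finset.sum_const, Finset.card_range, nsmul_eq_mul]
        push_cast
        ring

theorem hFn_pos {l j : ℕ} (h : j < l) : 0 < hFn l j := by
  have j_lt : (j : ℚ) < l := by exact_mod_cast h
  exact div_pos (by linarith [Nat.cast_nonneg (α := ℚ) j]) (sub_pos.2 j_lt)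

theorem hFn_eq_div {l : ℕ} (hl : l ≠ 0) (j : ℕ) :
    hFn l j = (1 + j / l : ℚ) / (1 - j / l) := by
  have l_ne : (l : ℚ) ≠ 0 := by exact_mod_cast hl
  rw [hFn, one_add_div l_ne, one_sub_div l_ne, div_div_div_cancel_right₀ l_ne]

theorem abs_log_hFn_sub_le {l j : ℕ} (h : 2 * j < l) :
    |Real.log (hFn l j : ℚ) - (2 * (j / l) + 2 / 3 * (j / l) ^ 3 : ℝ)|
      ≤ 8 / 3 * (j / l : ℝ) ^ 5 := by
  have l_pos : (0 : ℝ) < l := by exact_mod_cast (by omega : 0 < l)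
  rw [hFn_eq_div (by omega)]
  push_cast
  have y_nonneg : (0 : ℝ) ≤ j / l := by positivity
  have y_le : (j / l : ℝ) ≤ 1 / 2 := by
    rw [div_le_div_iff₀ l_pos (by norm_num)]
    exact_mod_cast (by omega : j * 2 ≤ 1 * l)
  set y : ℝ := j / l
  have artanh_error :
      |1 / 2 * Real.log ((1 + y) / (1 - y)) - (y + y ^ 3 / 3)| ≤ y ^ 5 / (1 - y ^ 2) := by
    have y_abs_lt : |y| < 1 := by rw [abs_of_nonneg y_nonneg]; linarith
    simpa [Finset.sum_range_succ, abs_of_nonneg y_nonneg, two_add_one_eq_three] using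
      Real.sum_range_sub_log_div_le y_abs_lt 2
  have remainder_le : y ^ 5 / (1 - y ^ 2) ≤ 4 / 3 * y ^ 5 := by
    have four_mul_sq_le : 4 * y ^ 2 ≤ 1 := by nlinarith
    rw [div_le_iff₀ (by linarith)]
    nlinarith [mul_nonneg (pow_nonneg y_nonneg 5) (sub_nonneg.2 four_mul_sq_le)]
  have bound := abs_le.1 (artanh_error.trans remainder_le)
  exact abs_le.2 ⟨by linarith, by linarith⟩

theorem cast_four_mul_sq_sub_one {R : Type*} [Ring R] {a : ℕ} (ha : 1 ≤ a) :
    ((4 * a ^ 2 - 1 : ℕ) : R) = 4 * (a : R) ^ 2 - 1 := by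
  rw [Nat.cast_sub (show 1 ≤ 4 * a ^ 2 by nlinarith)]
  push_cast
  rfl

theorem abs_log_gFn_four_mul_sq_sub_one_sub_le {a : ℕ} (ha : 1 ≤ a) :
    |Real.log (gFn (4 * a ^ 2 - 1) a : ℚ) - (1 / (2 * (a : ℝ)) + 7 / (32 * (a : ℝ) ^ 3))|
      ≤ 1 / (a : ℝ) ^ 5 := by
  have a_pos : (0 : ℝ) < a := by exact_mod_cast ha
  have error := abs_log_gFn_sub_sum_logFactorTaylor_le (l := 4 * a ^ 2 - 1) (j := a)
    (by have := Nat.le_self_pow two_ne_zero a; omega)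
  rw [sum_logFactorTaylor, cast_four_mul_sq_sub_one ha, sub_add_cancel] at error
  have ratio_eq : (a / (4 * a ^ 2) : ℝ) = 1 / (4 * a) := by field_simp
  have main_eq : 4 * (1 / (4 * a) : ℝ) ^ 2 * (2 * a + 2 * (1 / (4 * a))
        + a * (2 * a ^ 2 + 1) / (4 * a ^ 2) ^ 2 + 4 * (1 / (4 * a)) ^ 3)
        + 8 * (1 / (4 * a)) ^ 4 * (2 * a + 4 * (1 / (4 * a)))
      = 1 / (2 * a) + 7 / (32 * a ^ 3) + 1 / 16 * (1 / a ^ 5) := by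
    field_simp
    ring
  have remainder_eq : 2560 * a * (1 / (4 * a) : ℝ) ^ 6 = 5 / 8 * (1 / a ^ 5) := by
    field_simp
    norm_num
  rw [ratio_eq, main_eq, remainder_eq] at error
  have bound := abs_le.1 error
  have order_pos : (0 : ℝ) < 1 / a ^ 5 := one_div_pos.2 (pow_pos a_pos 5)
  exact abs_le.2 ⟨by linarith, by linarith⟩

theorem abs_div_four_mul_sq_sub_one_sub_le {a : ℝ} (ha : 1 ≤ a) :
    |a / (4 * a ^ 2 - 1) - (1 / (4 * a) + 1 / (16 * a ^ 3))| ≤ 1 / 48 * (1 / a ^ 5) := by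
  have denom_ge : 3 * a ^ 2 ≤ 4 * a ^ 2 - 1 := by nlinarith
  have denom_pos : 0 < 4 * a ^ 2 - 1 := by nlinarith
  have error_eq : a / (4 * a ^ 2 - 1) - (1 / (4 * a) + 1 / (16 * a ^ 3)) =
      1 / (16 * a ^ 3 * (4 * a ^ 2 - 1)) := by
    have denom_ne : a ^ 2 * 4 - 1 ≠ 0 := mul_comm 4 (a ^ 2) ▸ denom_pos.ne'
    field_simp
    ring
  rw [error_eq, abs_of_pos (by positivity)]
  calc _ ≤ 1 / (16 * a ^ 3 * (3 * a ^ 2)) := by gcongr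
    _ = _ := by field_simp; norm_num

theorem abs_div_four_mul_sq_sub_one_pow_three_sub_le {a : ℝ} (ha : 1 ≤ a) :
    |(a / (4 * a ^ 2 - 1)) ^ 3 - 1 / (64 * a ^ 3)| ≤ 1 / 36 * (1 / a ^ 5) := by
  have denom_ge : 3 * a ^ 2 ≤ 4 * a ^ 2 - 1 := by nlinarith
  have denom_pos : 0 < 4 * a ^ 2 - 1 := by nlinarith
  have error_eq : (a / (4 * a ^ 2 - 1)) ^ 3 - 1 / (64 * a ^ 3) =
      (48 * a ^ 4 - 12 * a ^ 2 + 1) / (64 * a ^ 3 * (4 * a ^ 2 - 1) ^ 3) := by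
    have denom_ne : a ^ 2 * 4 - 1 ≠ 0 := mul_comm 4 (a ^ 2) ▸ denom_pos.ne'
    field_simp
    ring
  have numerator_nonneg : 0 ≤ 48 * a ^ 4 - 12 * a ^ 2 + 1 := by nlinarith
  rw [error_eq, abs_of_nonneg (by positivity)]
  calc _ ≤ 48 * a ^ 4 / (64 * a ^ 3 * (3 * a ^ 2) ^ 3) := by gcongr; nlinarith
    _ = _ := by field_simp; norm_num

theorem abs_log_hFn_four_mul_sq_sub_one_sub_le {a : ℕ} (ha : 1 ≤ a) :
    |Real.log (hFn (4 * a ^ 2 - 1) a : ℚ) - (1 / (2 * (a : ℝ)) + 13 / (96 * (a : ℝ) ^ 3))|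
      ≤ 1 / (a : ℝ) ^ 5 := by
  have one_le : (1 : ℝ) ≤ a := by exact_mod_cast ha
  have error := abs_log_hFn_sub_le (l := 4 * a ^ 2 - 1) (j := a)
    (by have := Nat.le_self_pow two_ne_zero a; omega)
  rw [cast_four_mul_sq_sub_one ha] at error
  have linear_error := abs_div_four_mul_sq_sub_one_sub_le one_le
  have cubic_error := abs_div_four_mul_sq_sub_one_pow_three_sub_le one_le
  have remainder_le : (a / (4 * a ^ 2 - 1) : ℝ) ^ 5 ≤ 1 / 243 * (1 / a ^ 5) := by
    have denom_ge : 3 * (a : ℝ) ^ 2 ≤ 4 * a ^ 2 - 1 := by nlinarith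
    have denom_pos : (0 : ℝ) < 4 * a ^ 2 - 1 := by nlinarith
    calc _ ≤ (a / (3 * a ^ 2) : ℝ) ^ 5 := by gcongr
      _ = _ := by field_simp; norm_num
  have main_eq : 1 / (2 * a) + 13 / (96 * a ^ 3) =
      2 * (1 / (4 * a) + 1 / (16 * a ^ 3)) + 2 / 3 * (1 / (64 * a ^ 3) : ℝ) := by
    field_simp
    ring
  rw [main_eq]
  have order_pos : (0 : ℝ) < 1 / a ^ 5 := by positivity
  rw [abs_le] at error linear_error cubic_error ⊢
  constructor <;> linarith

theorem hFn_lt_gFn_four_mul_sq_sub_one {a : ℕ} (ha : 5 ≤ a) :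
    hFn (4 * a ^ 2 - 1) a < gFn (4 * a ^ 2 - 1) a := by
  have five_le : (5 : ℝ) ≤ a := by exact_mod_cast ha
  have a_le_sq : a ≤ a ^ 2 := Nat.le_self_pow two_ne_zero a
  have h_pos : (0 : ℝ) < hFn (4 * a ^ 2 - 1) a := by exact_mod_cast hFn_pos (by omega)
  have g_pos : (0 : ℝ) < gFn (4 * a ^ 2 - 1) a := by exact_mod_cast gFn_pos (by omega)
  have errors_lt_gap : 2 * (1 / (a : ℝ) ^ 5) < 7 / (32 * a ^ 3) - 13 / (96 * a ^ 3) :=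
    calc 2 * (1 / (a : ℝ) ^ 5) < a ^ 2 / 12 * (1 / a ^ 5) := by gcongr; nlinarith
      _ = _ := by field_simp; norm_num
  have g_error := abs_le.1 (abs_log_gFn_four_mul_sq_sub_one_sub_le (by omega : 1 ≤ a))
  have h_error := abs_le.1 (abs_log_hFn_four_mul_sq_sub_one_sub_le (by omega : 1 ≤ a))
  exact_mod_cast (Real.log_lt_log_iff h_pos g_pos).1 (by linarith)

/-- Along positive integers `a → ∞`, with `l = 4a² − 1`:
`log g_{4a²−1}(a) = 1/(2a) + 7/(32a³) + O(a⁻⁵)` and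
`log h_{4a²−1}(a) = 1/(2a) + 13/(96a³) + O(a⁻⁵)`;
in particular `g_{4a²−1}(a) > h_{4a²−1}(a)` for all sufficiently large `a`. -/
theorem stmt12 :
    (fun a : ℕ => Real.log ((gFn (4 * a ^ 2 - 1) a : ℚ) : ℝ)
        - (1 / (2 * (a : ℝ)) + 7 / (32 * (a : ℝ) ^ 3)))
      =O[atTop] (fun a : ℕ => 1 / (a : ℝ) ^ 5) ∧
    (fun a : ℕ => Real.log ((hFn (4 * a ^ 2 - 1) a : ℚ) : ℝ)
        - (1 / (2 * (a : ℝ)) + 13 / (96 * (a : ℝ) ^ 3)))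
      =O[atTop] (fun a : ℕ => 1 / (a : ℝ) ^ 5) ∧
    (∀ᶠ a : ℕ in atTop, hFn (4 * a ^ 2 - 1) a < gFn (4 * a ^ 2 - 1) a) := by
  refine ⟨.of_norm_eventuallyLE ?_, .of_norm_eventuallyLE ?_, ?_⟩
  · filter_upwards [eventually_ge_atTop 1] with a ha
    exact abs_log_gFn_four_mul_sq_sub_one_sub_le ha
  · filter_upwards [eventually_ge_atTop 1] with a ha
    exact abs_log_hFn_four_mul_sq_sub_one_sub_le ha
  · filter_upwards [eventually_ge_atTop 5] with a ha
    exact hFn_lt_gFn_four_mul_sq_sub_one ha
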